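/- Δ(n, S) is nonincreasing in S: for every integer n and every S ≥ 1, Δ(n, S + 1) ≤ Δ(n, S) (inequality in ℕ ∪ {∞}). -/

import Mathlib

/-!
The proof rests on Knill's recursion, for `n ≥ 2` and `S ≥ 2`,
`F n S = min_{1 ≤ m < n} (F m S + F m (S-1) + F (n-m) (S-1))`.

*Upper bound* (`F_add_le`): pebble `m`, pebble `n` starting from `m`, unpebble `m`.

*Lower bound* (`exists_F_add_le`): in an optimal solution let `m` be the largest value taken,
strictly between start and end, by the lowest pebbled square, and let `r` be the last time this
value is taken. Moves on squares `≤ m` and on squares `> m` are counted separately. At every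
intermediate time some square `≤ m` is pebbled, so the moves above `m` form a solution for
`n - m` with `S - 1` pebbles. The moves on the squares `≤ m` go from `∅` to `{m}` up to time `r`,
and from `{m}` to `∅` afterwards. After time `r` some square above `m` is always pebbled, so that
the second part uses only `S - 1` pebbles there: if at a time `t > r` all pebbles were `≤ m`,
then up to time `t` all moves above `m` could be dropped; moreover `{m}` has only one neighbour
among the configurations on `1, …, m` (toggle square `1`), so the visit to `{m}` at time `r`
could be cut out as well. This contradicts optimality.

The right-hand side of the recursion is an infimal convolution of convex sequences, so its
increments are obtained by merging sorted sequences of increments. The `i`-th smallest element of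
such a merge is a maximum of minima, which gives `Δ 1 S = 2` and, for `n ≥ 2`,
`Δ n S = max_{1 ≤ m < n} min (Δ m S + Δ m (S-1)) (Δ (n-m) (S-1))`.
The sequence `dl` is defined by this formula; it is visibly monotone in its inputs, so induction
gives `dl_mono` (in `n`) and `dl_antitone` (in `S`). Finally `fs_le` and `exists_le_fs` show that
the partial sums of `dl` satisfy the recursion, whence they equal `F` (`F_eq_fs`).
-/

/-- A solution of Bennett's pebble game on `n` squares: a sequence of
configurations `c 0, …, c T` (subsets of `{1, …, n}`), starting empty,
ending with exactly one pebble on square `n`, where consecutive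
configurations differ in exactly one square `i`, and a pebble may be added
to or removed from square `i` only if `i = 1` or square `i - 1` is pebbled. -/
structure PebbleSolution (n : ℕ) where
  T : ℕ
  c : ℕ → Finset ℕ
  subset : ∀ j ≤ T, c j ⊆ Finset.Icc 1 n
  init : c 0 = ∅
  final : c T = {n}
  move : ∀ j, 1 ≤ j → j ≤ T → ∃ i,
    symmDiff (c (j - 1)) (c j) = {i} ∧ (i = 1 ∨ i - 1 ∈ c (j - 1))

/-- The space used by a solution: the maximum number of pebbles on the board. -/
def PebbleSolution.space {n : ℕ} (s : PebbleSolution n) : ℕ :=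
  (Finset.range (s.T + 1)).sup fun j => (s.c j).card

/-- `F n S` is the minimum number of moves of a solution of the pebble game on
`n` squares using at most `S` pebbles, or `⊤` if no such solution exists. -/
noncomputable def F (n S : ℕ) : ℕ∞ :=
  sInf {t : ℕ∞ | ∃ s : PebbleSolution n, s.space ≤ S ∧ t = (s.T : ℕ∞)}

/-- `Δ n S = F (n+1) S - F n S` for `n ≥ 1` when `F (n+1) S` is finite;
`Δ n S = 0` for `n ≤ 0`; `Δ n S = ⊤` otherwise. -/
noncomputable def Δ (n : ℤ) (S : ℕ) : ℕ∞ :=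
  if n ≤ 0 then 0
  else if F (n.toNat + 1) S < ⊤ then F (n.toNat + 1) S - F n.toNat S
  else ⊤

/-- For `n ≥ 2` (and `S ≥ 2`), `mOpt n S` is the least `m` with `1 ≤ m ≤ n - 1`
minimizing `F m S + F m (S-1) + F (n-m) (S-1)`; `mOpt 0 S = mOpt 1 S = 0`. -/
noncomputable def mOpt (n S : ℕ) : ℕ :=
  if n ≤ 1 then 0
  else sInf {m : ℕ | 1 ≤ m ∧ m ≤ n - 1 ∧
    ∀ m', 1 ≤ m' → m' ≤ n - 1 →
      F m S + F m (S - 1) + F (n - m) (S - 1) ≤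
        F m' S + F m' (S - 1) + F (n - m') (S - 1)}

/-- `xk k S = min { n ≥ 1 : Δ n S > 2 ^ k }`. -/
noncomputable def xk (k S : ℕ) : ℕ :=
  sInf {n : ℕ | 1 ≤ n ∧ (2 : ℕ∞) ^ k < Δ (n : ℤ) S}

/-- The minimum time-space product `TS n = min_{S ≥ 1} S * F n S`. -/
noncomputable def TS (n : ℕ) : ℕ :=
  sInf {t : ℕ | ∃ S : ℕ, 1 ≤ S ∧ (t : ℕ∞) = (S : ℕ∞) * F n S}

/-- The binary entropy function. -/
noncomputable def H (γ : ℝ) : ℝ :=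
  -γ * Real.logb 2 γ - (1 - γ) * Real.logb 2 (1 - γ)

/-! ### Walks in the configuration graph -/

/-- One legal move of the pebble game: `B` arises from `A` by toggling a single square `i`
with `i = 1` or `i - 1` pebbled. -/
def Mv (A B : Finset ℕ) : Prop :=
  ∃ i, (∀ x, (x ∈ A ↔ x ∈ B) ↔ x ≠ i) ∧ (i = 1 ∨ i - 1 ∈ A)

lemma mv_iff (A B : Finset ℕ) :
    Mv A B ↔ ∃ i, symmDiff A B = {i} ∧ (i = 1 ∨ i - 1 ∈ A) := by
  have key : ∀ i, symmDiff A B = {i} ↔ ∀ x, (x ∈ A ↔ x ∈ B) ↔ x ≠ i := by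
    intro i
    rw [Finset.ext_iff]
    refine forall_congr' fun x => ?_
    simp only [Finset.mem_symmDiff, Finset.mem_singleton]
    tauto
  simp only [Mv, key]

/-- `A` is a configuration on the squares `1, …, n` with at most `S` pebbles. -/
def Ok (n S : ℕ) (A : Finset ℕ) : Prop := A ⊆ Finset.Icc 1 n ∧ A.card ≤ S

/-- `Walk P t A B`: there is a sequence of `t` legal moves from `A` to `B`, all of whose
configurations (endpoints included) satisfy `P`. -/
inductive Walk (P : Finset ℕ → Prop) : ℕ → Finset ℕ → Finset ℕ → Prop
  | nil {A} : P A → Walk P 0 A A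
  | cons {t A B C} : P A → Mv A B → Walk P t B C → Walk P (t + 1) A C

namespace Walk

variable {P Q R : Finset ℕ → Prop} {s t : ℕ} {A B C : Finset ℕ}

lemma left (h : Walk P t A B) : P A := by cases h <;> assumption

lemma append (h : Walk P s A B) (h' : Walk P t B C) : Walk P (s + t) A C := by
  induction h with
  | nil _ => simpa using h'
  | cons hA hm _ ih =>
    rw [Nat.add_right_comm]
    exact .cons hA hm (ih h')

lemma map (φ : Finset ℕ → Finset ℕ) (hP : ∀ A, P A → Q (φ A))
    (hm : ∀ A B, P A → P B → Mv A B → Mv (φ A) (φ B)) (h : Walk P t A B) :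
    Walk Q t (φ A) (φ B) := by
  induction h with
  | nil hA => exact .nil (hP _ hA)
  | cons hA hAB h ih => exact .cons (hP _ hA) (hm _ _ hA h.left hAB) ih

lemma mono (hP : ∀ A, P A → Q A) (h : Walk P t A B) : Walk Q t A B :=
  h.map id hP fun _ _ _ _ h => h

/-- Legal moves are reversible, because square `0` never carries a pebble. -/
lemma reverse (hP : ∀ A, P A → 0 ∉ A) (h : Walk P t A B) : Walk P t B A := by
  induction h with
  | nil hA => exact .nil hA
  | @cons t A B C hA hAB h ih =>
    refine ih.append (.cons h.left ?_ (.nil hA))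
    obtain ⟨i, hi, h1⟩ := hAB
    have h0A := hP _ hA
    have h0B := hP _ h.left
    refine ⟨i, fun x => by rw [← hi x]; tauto, ?_⟩
    grind

/-- Moves that become trivial under one of two projections `φ`, `ψ`, and legal under the
other, can be counted separately. -/
lemma split (φ ψ : Finset ℕ → Finset ℕ) (hQ : ∀ A, P A → Q (φ A)) (hR : ∀ A, P A → R (ψ A))
    (hm : ∀ A B, P A → P B → Mv A B →
      (Mv (φ A) (φ B) ∧ ψ A = ψ B) ∨ (φ A = φ B ∧ Mv (ψ A) (ψ B)))
    (h : Walk P t A B) :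
    ∃ t₁ t₂, t₁ + t₂ = t ∧ Walk Q t₁ (φ A) (φ B) ∧ Walk R t₂ (ψ A) (ψ B) := by
  induction h with
  | nil hA => exact ⟨0, 0, rfl, .nil (hQ _ hA), .nil (hR _ hA)⟩
  | @cons t A B C hA hAB h ih =>
    obtain ⟨t₁, t₂, rfl, h₁, h₂⟩ := ih
    rcases hm _ _ hA h.left hAB with ⟨h3, h4⟩ | ⟨h3, h4⟩
    · exact ⟨t₁ + 1, t₂, by omega, .cons (hQ _ hA) h3 h₁, h4 ▸ h₂⟩
    · exact ⟨t₁, t₂ + 1, by omega, h3 ▸ h₁, .cons (hR _ hA) h4 h₂⟩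

lemma exists_fun (h : Walk P t A B) : ∃ c : ℕ → Finset ℕ, c 0 = A ∧ c t = B ∧
    (∀ j ≤ t, P (c j)) ∧ ∀ j < t, Mv (c j) (c (j + 1)) := by
  induction h with
  | @nil A hA => exact ⟨fun _ => A, rfl, rfl, fun _ _ => hA, by simp⟩
  | @cons t A B C hA hAB h ih =>
    obtain ⟨c, h0, ht, hP, hm⟩ := ih
    refine ⟨fun j => Nat.casesOn j A c, rfl, ht, ?_, ?_⟩
    · rintro (_ | j) hj
      · exact hA
      · exact hP j (by omega)
    · rintro (_ | j) hj
      · simpa [h0] using hAB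
      · exact hm j (by omega)

lemma of_fun {c : ℕ → Finset ℕ} {a : ℕ} (d : ℕ) (hP : ∀ j, a ≤ j → j ≤ a + d → P (c j))
    (hm : ∀ j, a ≤ j → j < a + d → Mv (c j) (c (j + 1))) :
    Walk P d (c a) (c (a + d)) := by
  induction d with
  | zero => exact .nil (hP a le_rfl le_rfl)
  | succ d ih =>
    refine (ih (fun j h h' => hP j h (by omega)) fun j h h' => hm j h (by omega)).append
      (t := 1) (.cons (hP _ (by omega) (by omega)) (hm (a + d) (by omega) (by omega))
        (.nil (hP _ (by omega) (by omega))))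

end Walk

lemma F_le_of_walk {n S t : ℕ} (h : Walk (Ok n S) t ∅ {n}) : F n S ≤ t := by
  obtain ⟨c, h0, ht, hP, hm⟩ := h.exists_fun
  refine sInf_le ⟨⟨t, c, fun j hj => (hP j hj).1, h0, ht, ?_⟩, ?_, rfl⟩
  · intro j hj hjt
    obtain ⟨j, rfl⟩ : ∃ k, j = k + 1 := ⟨j - 1, by omega⟩
    exact (mv_iff _ _).1 (hm j (by omega))
  · exact Finset.sup_le fun j hj => (hP j (by simpa [Nat.lt_succ_iff] using hj)).2

lemma exists_walk_of_F {n S : ℕ} (h : F n S ≠ ⊤) :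
    ∃ t : ℕ, F n S = t ∧ Walk (Ok n S) t ∅ {n} := by
  have hne : {t : ℕ∞ | ∃ s : PebbleSolution n, s.space ≤ S ∧ t = (s.T : ℕ∞)}.Nonempty := by
    by_contra hc
    rw [Set.not_nonempty_iff_eq_empty] at hc
    exact h (by rw [F, hc, sInf_empty])
  obtain ⟨s, hs, hT⟩ := csInf_mem hne
  refine ⟨s.T, hT, ?_⟩
  have := Walk.of_fun (P := Ok n S) (c := s.c) (a := 0) s.T
    (fun j _ hj => ⟨s.subset j (by omega), le_trans
      (Finset.le_sup (f := fun j => (s.c j).card) (Finset.mem_range.2 (by omega))) hs⟩)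
    (fun j _ hj => (mv_iff _ _).2 (s.move (j + 1) (by omega) (by omega)))
  simpa [s.init, s.final] using this

/-! ### Splitting the board at a square -/

/-- The part of a configuration on the squares `≤ m`. -/
def lo (m : ℕ) (A : Finset ℕ) : Finset ℕ := A.filter (· ≤ m)

/-- The part of a configuration on the squares `> m`, renumbered to start at square `1`. -/
def hi (m : ℕ) (A : Finset ℕ) : Finset ℕ := (A.filter (¬ · ≤ m)).image (· - m)

lemma mem_lo {m x : ℕ} {A : Finset ℕ} : x ∈ lo m A ↔ x ∈ A ∧ x ≤ m := by simp [lo]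

lemma mem_hi {m x : ℕ} {A : Finset ℕ} : x ∈ hi m A ↔ 1 ≤ x ∧ x + m ∈ A := by
  simp only [hi, Finset.mem_image, Finset.mem_filter]
  constructor
  · rintro ⟨y, ⟨hy, hm⟩, rfl⟩
    exact ⟨by omega, by rwa [Nat.sub_add_cancel (by omega)]⟩
  · rintro ⟨h1, h2⟩
    exact ⟨x + m, ⟨h2, by omega⟩, by omega⟩

lemma card_lo_add_card_hi (m : ℕ) (A : Finset ℕ) : (lo m A).card + (hi m A).card ≤ A.card := by
  have h := Finset.card_filter_add_card_filter_not (s := A) (· ≤ m)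
  have h' : (hi m A).card ≤ (A.filter (¬ · ≤ m)).card := Finset.card_image_le
  simp only [lo]
  omega

lemma mv_lo_hi {m : ℕ} {A B : Finset ℕ} (h : Mv A B) :
    (Mv (lo m A) (lo m B) ∧ hi m A = hi m B) ∨ (lo m A = lo m B ∧ Mv (hi m A) (hi m B)) := by
  obtain ⟨i, h1, h2⟩ := h
  by_cases him : i ≤ m
  · left
    refine ⟨⟨i, fun x => ?_, ?_⟩, ?_⟩
    · simp only [mem_lo]; have := h1 x; by_cases hx : x ≤ m <;> grind
    · simp only [mem_lo]; refine h2.imp id fun h => ⟨h, by omega⟩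
    · ext x
      simp only [mem_hi]
      have := h1 (x + m)
      by_cases hx : 1 ≤ x
      · have := this.2 (by omega)
        tauto
      · tauto
  · right
    refine ⟨?_, i - m, fun x => ?_, ?_⟩
    · ext x
      simp only [mem_lo]
      have := h1 x
      by_cases hx : x ≤ m
      · have := this.2 (by omega)
        tauto
      · tauto
    · simp only [mem_hi]
      have := h1 (x + m)
      by_cases hx : 1 ≤ x
      · have h3 : x + m ≠ i ↔ x ≠ i - m := by omega
        rw [← h3, ← this]; tauto
      · have : x ≠ i - m := by omega
        tauto
    · rcases h2 with rfl | h2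
      · left; omega
      · by_cases h3 : i - m = 1
        · exact .inl h3
        · right
          rw [mem_hi]
          exact ⟨by omega, by rwa [show i - m - 1 + m = i - 1 by omega]⟩

lemma Ok.zero_notMem {n S : ℕ} {A : Finset ℕ} (h : Ok n S A) : 0 ∉ A := fun h0 => by
  have := h.1 h0; simp at this

lemma lo_subset {n m : ℕ} {A : Finset ℕ} (h : A ⊆ Finset.Icc 1 n) :
    lo m A ⊆ Finset.Icc 1 m := fun x hx => by
  rw [mem_lo] at hx
  have := h hx.1
  simp at this ⊢; omega

lemma hi_subset {n m : ℕ} {A : Finset ℕ} (h : A ⊆ Finset.Icc 1 n) :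
    hi m A ⊆ Finset.Icc 1 (n - m) := fun x hx => by
  rw [mem_hi] at hx
  have := h hx.2
  simp at this ⊢; omega

lemma card_lo_le (m : ℕ) (A : Finset ℕ) : (lo m A).card ≤ A.card :=
  Finset.card_le_card (Finset.filter_subset _ _)

/-! ### The recursion for the optimal time -/

/-- Pebble square `m` with `S + 1` pebbles, use it as the origin for pebbling `m + k` with `S`
further pebbles, then remove the pebble on `m` with `S` pebbles. -/
lemma F_add_le {m k S : ℕ} (hm : 1 ≤ m) (hk : 1 ≤ k) :
    F (m + k) (S + 1) ≤ F m (S + 1) + F m S + F k S := by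
  by_cases h1 : F m (S + 1) = ⊤
  · simp [h1]
  by_cases h2 : F m S = ⊤
  · simp [h2]
  by_cases h3 : F k S = ⊤
  · simp [h3]
  obtain ⟨t1, e1, w1⟩ := exists_walk_of_F h1
  obtain ⟨t2, e2, w2⟩ := exists_walk_of_F h2
  obtain ⟨t3, e3, w3⟩ := exists_walk_of_F h3
  rw [e1, e2, e3]
  have v1 : Walk (Ok (m + k) (S + 1)) t1 ∅ {m} := w1.mono fun A hA =>
    ⟨hA.1.trans (Finset.Icc_subset_Icc le_rfl (by omega)), hA.2⟩
  have v3 : Walk (Ok (m + k) (S + 1)) t3 {m} {m, m + k} := by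
    have := w3.map (Q := Ok (m + k) (S + 1)) (fun A => insert m (A.image (· + m))) ?_ ?_
    · simpa [add_comm] using this
    · intro A hA
      constructor
      · intro x hx
        simp only [Finset.mem_insert, Finset.mem_image] at hx
        rcases hx with rfl | ⟨y, hy, rfl⟩
        · simp; omega
        · have := hA.1 hy
          simp at this ⊢; omega
      · have := Finset.card_insert_le m (A.image (· + m))
        have := Finset.card_image_le (s := A) (f := (· + m))
        have := hA.2
        omega
    · rintro A B hA hB ⟨i, h1, h2⟩
      have h0A := hA.zero_notMem
      have h0B := hB.zero_notMem
      have hmem : ∀ (C : Finset ℕ) x, x ∈ insert m (C.image (· + m)) ↔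
          x = m ∨ (m ≤ x ∧ x - m ∈ C) := by
        intro C x
        simp only [Finset.mem_insert, Finset.mem_image]
        refine or_congr Iff.rfl ⟨?_, ?_⟩
        · rintro ⟨y, hy, rfl⟩; simpa using hy
        · rintro ⟨h, h'⟩; exact ⟨_, h', by omega⟩
      have hi0 : i ≠ 0 := by
        rintro rfl
        have := h1 0
        tauto
      refine ⟨i + m, fun x => ?_, .inr ?_⟩
      · simp only [hmem]
        have := h1 (x - m)
        by_cases hx : m < x
        · have e : x ≠ i + m ↔ x - m ≠ i := by omega
          rw [e, ← this]
          simp [hx.ne', hx.le]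
        · have h3 : x ≠ i + m := by omega
          rcases (not_lt.1 hx).eq_or_lt with rfl | hx
          · simpa using hi0
          · simp [hx.ne, hx.not_ge, h3]
      · rw [hmem]
        rcases h2 with rfl | h2
        · left; omega
        · right
          exact ⟨by omega, by rwa [show i + m - 1 - m = i - 1 by omega]⟩
  have v2 : Walk (Ok (m + k) (S + 1)) t2 {m, m + k} {m + k} := by
    have := (w2.reverse fun A hA => hA.zero_notMem).map (Q := Ok (m + k) (S + 1))
      (fun A => insert (m + k) A) ?_ ?_
    · simpa [Finset.pair_comm] using this
    · intro A hA
      constructor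
      · intro x hx
        simp only [Finset.mem_insert] at hx
        rcases hx with rfl | hx
        · simp; omega
        · have := hA.1 hx
          simp at this ⊢; omega
      · have := Finset.card_insert_le (m + k) A
        have := hA.2
        omega
    · rintro A B hA hB ⟨i, h1, h2⟩
      have hA' : m + k ∉ A := fun h => by have := hA.1 h; simp at this; omega
      have hB' : m + k ∉ B := fun h => by have := hB.1 h; simp at this; omega
      refine ⟨i, fun x => ?_, h2.imp_right (Finset.mem_insert_of_mem ·)⟩
      simp only [Finset.mem_insert]
      rw [← h1 x]
      by_cases hx : x = m + k
      · subst hx; simp [hA', hB']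
      · simp [hx]
  have := F_le_of_walk ((v1.append v3).append v2)
  refine this.trans (le_of_eq ?_)
  push_cast
  ring

/-- The lower bound in the recursion; the witness `m` is the largest value taken by the lowest
pebbled square strictly between start and end of an optimal solution. -/
lemma exists_F_add_le {n S : ℕ} (hn : 2 ≤ n) (hS : 1 ≤ S) :
    ∃ m, 1 ≤ m ∧ m < n ∧ F m (S + 1) + F m S + F (n - m) S ≤ F n (S + 1) := by
  by_cases hF : F n (S + 1) = ⊤
  · exact ⟨1, le_rfl, by omega, by simp [hF]⟩
  obtain ⟨T, hT, w⟩ := exists_walk_of_F hF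
  have hmin : ∀ t, Walk (Ok n (S + 1)) t ∅ {n} → T ≤ t := fun t ht => by
    have := F_le_of_walk ht
    rw [hT] at this
    exact_mod_cast this
  obtain ⟨c, h0, hcT, hP, hm⟩ := w.exists_fun
  have seg : ∀ a d, a + d ≤ T → Walk (Ok n (S + 1)) d (c a) (c (a + d)) := fun a d h =>
    Walk.of_fun d (fun j _ h' => hP j (by omega)) fun j _ h' => hm j (by omega)
  -- By minimality the end configurations occur only at the ends.
  have hne0 : ∀ j, 0 < j → j < T → c j ≠ ∅ := by
    intro j hj hjT h
    have := seg j (T - j) (by omega)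
    rw [h, show j + (T - j) = T by omega, hcT] at this
    have := hmin _ this
    omega
  have hneT : ∀ j, j < T → c j ≠ {n} := by
    intro j hjT h
    have := seg 0 j (by omega)
    rw [zero_add, h, h0] at this
    have := hmin _ this
    omega
  have hT2 : 2 ≤ T := by
    by_contra hlt
    have hT01 : T = 0 ∨ T = 1 := by omega
    rcases hT01 with rfl | rfl
    · rw [h0] at hcT
      exact (Finset.singleton_ne_empty n) hcT.symm
    · obtain ⟨i, h1, h2⟩ := hm 0 (by omega)
      rw [h0] at h1 h2
      simp only [zero_add, hcT] at h1
      have := h1 n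
      simp at this h2
      omega
  have hlow : ∀ j, 0 < j → j < T → ∃ x ∈ c j, x < n ∧ 1 ≤ x ∧ ∀ y ∈ c j, x ≤ y := by
    intro j hj hjT
    have hne := Finset.nonempty_iff_ne_empty.2 (hne0 j hj hjT)
    have hsub := (hP j hjT.le).1
    have hmem := (c j).min'_mem hne
    have hI := Finset.mem_Icc.1 (hsub hmem)
    refine ⟨(c j).min' hne, hmem, ?_, hI.1, fun y hy => (c j).min'_le y hy⟩
    by_contra hge
    refine hneT j hjT (Finset.eq_singleton_iff_nonempty_unique_mem.2 ⟨hne, fun y hy => ?_⟩)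
    have h1 := (c j).min'_le y hy
    have h2 := Finset.mem_Icc.1 (hsub hy)
    omega
  -- `Good m j`: at the intermediate time `j` the lowest pebble is on `m`.
  let Good : ℕ → ℕ → Prop := fun m j => 0 < j ∧ j < T ∧ m ∈ c j ∧ ∀ y ∈ c j, m ≤ y
  obtain ⟨m, ⟨hm1, hmn, hmG⟩, hmax⟩ : ∃ m, (1 ≤ m ∧ m < n ∧ ∃ j, Good m j) ∧
      ∀ m' j, Good m' j → m' ≤ m := by
    classical
    have hb : ∀ m' j, Good m' j → m' ≤ n := fun m' j h => by
      have := (hP j h.2.1.le).1 h.2.2.1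
      simp at this; omega
    obtain ⟨x, hx, hxn, hx1, hxy⟩ := hlow 1 (by omega) (by omega)
    have hex : ∃ m', m' ≤ n ∧ ∃ j, Good m' j := ⟨x, hxn.le, 1, by omega, by omega, hx, hxy⟩
    let m := Nat.findGreatest (fun m' => ∃ j, Good m' j) n
    have hmG : ∃ j, Good m j :=
      Nat.findGreatest_spec (P := fun m' => ∃ j, Good m' j) hxn.le
        ⟨1, by omega, by omega, hx, hxy⟩
    refine ⟨m, ⟨?_, ?_, hmG⟩, fun m' j h => Nat.le_findGreatest (hb m' j h) ⟨j, h⟩⟩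
    · obtain ⟨j, hj⟩ := hmG
      have := (hP j hj.2.1.le).1 hj.2.2.1
      simp at this; omega
    · obtain ⟨j, hj, hjT, h1, h2⟩ := hmG
      obtain ⟨x, hx, hxn, _⟩ := hlow j hj hjT
      have := h2 x hx
      omega
  have hle : ∀ j, 0 < j → j < T → ∃ x ∈ c j, x ≤ m := by
    intro j hj hjT
    obtain ⟨x, hx, _, _, hxy⟩ := hlow j hj hjT
    exact ⟨x, hx, hmax x j ⟨hj, hjT, hx, hxy⟩⟩
  obtain ⟨r, hr, hlast⟩ : ∃ r, Good m r ∧ ∀ j, Good m j → j ≤ r := by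
    classical
    obtain ⟨j, hj⟩ := hmG
    exact ⟨Nat.findGreatest (Good m) T, Nat.findGreatest_spec (P := Good m) hj.2.1.le hj,
      fun j' hj' => Nat.le_findGreatest hj'.2.1.le hj'⟩
  obtain ⟨hr0, hrT, hrm, hrmin⟩ := hr
  have hlor : lo m (c r) = {m} := by
    ext x
    rw [mem_lo, Finset.mem_singleton]
    constructor
    · rintro ⟨h1, h2⟩
      have := hrmin x h1
      omega
    · rintro rfl
      exact ⟨hrm, le_rfl⟩
  have hn_lo : lo m {n} = ∅ := by
    ext x
    simp [mem_lo]
    omega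
  have hn_hi : hi m {n} = {n - m} := by
    ext x
    simp [mem_hi]
    omega
  have h_lo0 : lo m ∅ = ∅ := by simp [lo]
  have h_hi0 : hi m ∅ = ∅ := by simp [hi]
  -- After time `r` some square above `m` stays pebbled.
  have habove : ∀ j, r < j → j ≤ T → ∃ x ∈ c j, m < x := by
    intro t hrt htT
    rcases htT.eq_or_lt with rfl | htT
    · exact ⟨n, by simp [hcT], hmn⟩
    by_contra hno
    push Not at hno
    have hloct : lo m (c t) = c t := by
      ext x
      rw [mem_lo]
      exact ⟨fun h => h.1, fun h => ⟨h, hno x h⟩⟩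
    have loseg : ∀ a d, a + d ≤ T →
        ∃ d' ≤ d, Walk (Ok n (S + 1)) d' (lo m (c a)) (lo m (c (a + d))) := by
      intro a d had
      obtain ⟨t₁, t₂, h12, h1, -⟩ := (seg a d had).split (Q := Ok n (S + 1)) (R := fun _ => True)
        (lo m) (hi m)
        (fun A hA => ⟨(lo_subset hA.1).trans (Finset.Icc_subset_Icc le_rfl hmn.le),
          (card_lo_le m A).trans hA.2⟩) (fun _ _ => trivial)
        (fun _ _ _ _ h => mv_lo_hi h)
      exact ⟨t₁, by omega, h1⟩
    -- Any coincidence of lower parts at two times `a < b ≤ t` allows a shortcut.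
    have short : ∀ a b, a < b → b ≤ t → lo m (c a) ≠ lo m (c b) := by
      intro a b hab hbt heq
      obtain ⟨d₁, hd₁, w₁⟩ := loseg 0 a (by omega)
      obtain ⟨d₂, hd₂, w₂⟩ := loseg b (t - b) (by omega)
      have w₃ := seg t (T - t) (by omega)
      rw [show b + (t - b) = t by omega, hloct] at w₂
      rw [show t + (T - t) = T by omega, hcT] at w₃
      rw [zero_add, heq, h0, h_lo0] at w₁
      have := hmin _ ((w₁.append w₂).append w₃)
      omega
    -- The lower part `{m}` can only be entered and left by toggling square `1`.
    have tog : ∀ A B : Finset ℕ, 0 ∉ A → Mv A B → lo m A ≠ lo m B →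
        (lo m A = {m} ∨ lo m B = {m}) →
        ∀ x, (x ∈ lo m A ↔ x ∈ lo m B) ↔ x ≠ 1 := by
      intro A B hA hAB hne hor
      rcases mv_lo_hi (m := m) hAB with ⟨⟨i, h1, h2⟩, -⟩ | ⟨h, -⟩
      · rcases h2 with rfl | h2
        · exact h1
        · exfalso
          have hi0 : i ≠ 0 := by
            rintro rfl
            rw [mem_lo] at h2
            exact hA h2.1
          have h2' : i - 1 ∈ lo m B := ((h1 (i - 1)).2 (by omega)).1 h2
          have him : i ≤ m := by
            by_contra hlt
            refine absurd rfl ((h1 i).1 ?_)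
            simp only [mem_lo]
            tauto
          have : i - 1 = m := by
            rcases hor with h | h
            · rw [h] at h2; simpa using h2
            · rw [h] at h2'; simpa using h2'
          omega
      · exact absurd h hne
    have z : ∀ j ≤ T, 0 ∉ c j := fun j hj => (hP j hj).zero_notMem
    obtain ⟨q, rfl⟩ : ∃ q, r = q + 1 := ⟨r - 1, by omega⟩
    have e1 := tog _ _ (z q (by omega)) (hm q (by omega))
      (short q (q + 1) (by omega) (by omega)) (.inr hlor)
    have e2 := tog _ _ (z (q + 1) (by omega)) (hm (q + 1) (by omega))
      (short (q + 1) (q + 1 + 1) (by omega) (by omega)) (.inl hlor)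
    refine short q (q + 1 + 1) (by omega) (by omega) ?_
    ext x
    have := e1 x
    have := e2 x
    tauto
  have hhi : ∀ j ≤ T, (hi m (c j)).card ≤ S := by
    intro j hj
    rcases Nat.eq_zero_or_pos j with rfl | hj0
    · simp [h0, h_hi0]
    rcases hj.eq_or_lt with rfl | hjT
    · rw [hcT, hn_hi]; simpa using hS
    · obtain ⟨x, hx, hxm⟩ := hle j hj0 hjT
      have h1 : 0 < (lo m (c j)).card := Finset.card_pos.2 ⟨x, mem_lo.2 ⟨hx, hxm⟩⟩
      have := card_lo_add_card_hi m (c j)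
      have := (hP j hj).2
      omega
  have hlo : ∀ j, r ≤ j → j ≤ T → (lo m (c j)).card ≤ S := by
    intro j hrj hj
    rcases hrj.eq_or_lt with rfl | hrj
    · rw [hlor]; simpa using hS
    · obtain ⟨x, hx, hxm⟩ := habove j hrj hj
      have h1 : 0 < (hi m (c j)).card := Finset.card_pos.2
        ⟨x - m, mem_hi.2 ⟨by omega, by rwa [Nat.sub_add_cancel hxm.le]⟩⟩
      have := card_lo_add_card_hi m (c j)
      have := (hP j hj).2
      omega
  obtain ⟨a₁, b₁, hab₁, wa₁, wb₁⟩ := (Walk.of_fun (c := c) (a := 0)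
      (P := fun A => Ok n (S + 1) A ∧ (hi m A).card ≤ S) r
      (fun j _ h' => ⟨hP j (by omega), hhi j (by omega)⟩) fun j _ h' => hm j (by omega)).split
    (Q := Ok m (S + 1)) (R := Ok (n - m) S) (lo m) (hi m)
    (fun A hA => ⟨lo_subset hA.1.1, (card_lo_le m A).trans hA.1.2⟩)
    (fun A hA => ⟨hi_subset hA.1.1, hA.2⟩)
    (fun _ _ _ _ h => mv_lo_hi h)
  obtain ⟨a₂, b₂, hab₂, wa₂, wb₂⟩ := (Walk.of_fun (c := c) (a := r)
      (P := fun A => Ok n (S + 1) A ∧ (hi m A).card ≤ S ∧ (lo m A).card ≤ S) (T - r)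
      (fun j h h' => ⟨hP j (by omega), hhi j (by omega), hlo j h (by omega)⟩)
      fun j _ h' => hm j (by omega)).split
    (Q := Ok m S) (R := Ok (n - m) S) (lo m) (hi m)
    (fun A hA => ⟨lo_subset hA.1.1, hA.2.2⟩)
    (fun A hA => ⟨hi_subset hA.1.1, hA.2.1⟩)
    (fun _ _ _ _ h => mv_lo_hi h)
  rw [show r + (T - r) = T by omega, hcT] at wa₂ wb₂
  rw [zero_add, h0] at wa₁ wb₁
  rw [hlor, h_lo0] at wa₁
  rw [hlor, hn_lo] at wa₂
  rw [h_hi0] at wb₁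
  rw [hn_hi] at wb₂
  have f1 := F_le_of_walk wa₁
  have f2 := F_le_of_walk (wa₂.reverse fun A hA => hA.zero_notMem)
  have f3 := F_le_of_walk (wb₁.append wb₂)
  refine ⟨m, hm1, hmn, (add_le_add (add_le_add f1 f2) f3).trans (le_of_eq ?_)⟩
  rw [hT]
  norm_cast
  omega

lemma F_one (S : ℕ) : F 1 (S + 1) = 1 := by
  apply le_antisymm
  · have : Walk (Ok 1 (S + 1)) 1 ∅ {1} :=
      .cons (by simp [Ok]) ⟨1, by simp, .inl rfl⟩ (.nil (by simp [Ok]))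
    simpa using F_le_of_walk this
  · by_cases h : F 1 (S + 1) = ⊤
    · simp [h]
    · obtain ⟨t, ht, w⟩ := exists_walk_of_F h
      rw [ht]
      rcases t with _ | t
      · obtain ⟨c, h1, h2, -⟩ := w.exists_fun
        rw [h1] at h2
        exact absurd h2.symm (Finset.singleton_ne_empty 1)
      · exact_mod_cast Nat.succ_le_succ (Nat.zero_le t)

/-- With one pebble only the configurations `∅` and `{1}` are reachable. -/
lemma F_space_one {n : ℕ} (hn : 2 ≤ n) : F n 1 = ⊤ := by
  by_contra h
  obtain ⟨t, -, w⟩ := exists_walk_of_F h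
  have key : ∀ {t : ℕ} {A B : Finset ℕ}, Walk (Ok n 1) t A B → A ⊆ {1} → B ⊆ {1} := by
    intro t A B w
    induction w with
    | nil _ => exact id
    | @cons t A B C hA hAB hw ih =>
      intro hA1
      apply ih
      obtain ⟨i, h1, h2⟩ := hAB
      have hi1 : i = 1 := by
        rcases h2 with h2 | h2
        · exact h2
        · exfalso
          have e := Finset.mem_singleton.1 (hA1 h2)
          have hiA : i ∉ A := fun hh => by
            have := Finset.mem_singleton.1 (hA1 hh)
            omega
          have hiB : i ∈ B := by
            by_contra hh
            exact (h1 i).1 (by tauto) rfl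
          have hiB' : i - 1 ∈ B := ((h1 (i - 1)).2 (by omega)).1 h2
          have := Finset.card_le_one.1 hw.left.2 _ hiB _ hiB'
          omega
      intro x hx
      by_contra hx1
      have : x ≠ i := by rw [hi1]; simpa using hx1
      exact hx1 (hA1 (((h1 x).2 this).2 hx))
  have := key w (by simp)
  simp at this
  omega

/-! ### Solving the recursion -/

/-- `dl s i` is the increment `F (i + 2) (s + 1) - F (i + 1) (s + 1)`, described recursively.
It is `⊤` for one pebble and starts with `2` for more pebbles; `dl (s + 1) (i + 1)` is the
`(i + 1)`-st smallest element in the merge of the sequences `dl (s + 1) + dl s` and `dl s`,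
written as a maximum of minima. -/
noncomputable def dl : ℕ → ℕ → ℕ∞
  | 0, _ => ⊤
  | _ + 1, 0 => 2
  | s + 1, i + 1 => Finset.univ.sup fun a : Fin (i + 1) =>
      min (dl (s + 1) a + dl s a) (dl s (i - a))
termination_by s i => (s, i)

lemma dl_succ_le {s i : ℕ} {x : ℕ∞} : dl (s + 1) (i + 1) ≤ x ↔
    ∀ a b, a + b = i → min (dl (s + 1) a + dl s a) (dl s b) ≤ x := by
  rw [dl, Finset.sup_le_iff]
  constructor
  · intro h a b hab
    have := h ⟨a, by omega⟩ (Finset.mem_univ _)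
    simpa [show i - a = b by omega] using this
  · intro h a _
    exact h a (i - a) (by omega)

lemma le_dl_succ {s i a b : ℕ} (h : a + b = i) :
    min (dl (s + 1) a + dl s a) (dl s b) ≤ dl (s + 1) (i + 1) :=
  dl_succ_le.1 le_rfl a b h

lemma exists_dl_succ (s i : ℕ) : ∃ a b, a + b = i ∧
    dl (s + 1) (i + 1) = min (dl (s + 1) a + dl s a) (dl s b) := by
  obtain ⟨a, -, ha⟩ := Finset.exists_mem_eq_sup (Finset.univ : Finset (Fin (i + 1)))
    Finset.univ_nonempty
    (fun a : Fin (i + 1) => min (dl (s + 1) a + dl s a) (dl s (i - a)))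
  exact ⟨a, i - a, by omega, by rw [dl, ha]⟩

lemma two_le_dl (s i : ℕ) : 2 ≤ dl s i := by
  induction s generalizing i with
  | zero => simp [dl]
  | succ s ih =>
    cases i with
    | zero => simp [dl]
    | succ i =>
      refine le_trans (le_min ?_ (ih i)) (le_dl_succ (zero_add i))
      exact (ih 0).trans le_add_self

lemma dl_mono (s : ℕ) : Monotone (dl s) := by
  induction s with
  | zero => intro i j _; simp [dl]
  | succ s ih =>
    refine monotone_nat_of_le_succ fun i => ?_
    cases i with
    | zero => rw [dl]; exact two_le_dl _ _
    | succ i =>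
      refine dl_succ_le.2 fun a b hab => ?_
      exact (min_le_min le_rfl (ih (Nat.le_succ b))).trans (le_dl_succ (by omega))

lemma dl_antitone (s i : ℕ) : dl (s + 1) i ≤ dl s i := by
  induction s generalizing i with
  | zero => simp [dl]
  | succ s ihs =>
    induction i using Nat.strong_induction_on with
    | _ i ih =>
      cases i with
      | zero => simp [dl]
      | succ i =>
        refine dl_succ_le.2 fun a b hab => le_trans ?_ (le_dl_succ hab)
        exact min_le_min (add_le_add (ih a (by omega)) (ihs a)) (ihs b)

/-- The partial sums of the increments; `fs s i` is `F (i + 1) (s + 1)`. -/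
noncomputable def fs (s i : ℕ) : ℕ∞ := 1 + ∑ j ∈ Finset.range i, dl s j

lemma fs_zero (s : ℕ) : fs s 0 = 1 := by simp [fs]

lemma fs_succ (s i : ℕ) : fs s (i + 1) = fs s i + dl s i := by
  simp [fs, Finset.sum_range_succ, add_assoc]

lemma fs_le (s i : ℕ) : ∀ a b, a + b = i →
    fs (s + 1) (i + 1) ≤ fs (s + 1) a + fs s a + fs s b := by
  induction i with
  | zero =>
    intro a b hab
    obtain ⟨rfl, rfl⟩ : a = 0 ∧ b = 0 := by omega
    rw [fs_succ]
    simp only [fs_zero, dl]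
    norm_num
  | succ i ih =>
    intro a b hab
    obtain ⟨a', b', hab', he⟩ := exists_dl_succ s i
    rw [fs_succ]
    -- Since `a' + b' < a + b`, the bound on the new increment applies to one of the two parts.
    by_cases h : a' < a
    · obtain ⟨a, rfl⟩ : ∃ k, a = k + 1 := ⟨a - 1, by omega⟩
      have h1 : dl (s + 1) (i + 1) ≤ dl (s + 1) a + dl s a := by
        rw [he]
        exact (min_le_left _ _).trans
          (add_le_add (dl_mono _ (by omega)) (dl_mono _ (by omega)))
      refine (add_le_add (ih a b (by omega)) h1).trans (le_of_eq ?_)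
      rw [fs_succ, fs_succ]
      ring
    · obtain ⟨b, rfl⟩ : ∃ k, b = k + 1 := ⟨b - 1, by omega⟩
      have h1 : dl (s + 1) (i + 1) ≤ dl s b := by
        rw [he]
        exact (min_le_right _ _).trans (dl_mono _ (by omega))
      refine (add_le_add (ih a b (by omega)) h1).trans (le_of_eq ?_)
      rw [fs_succ s b]
      ring

lemma exists_le_fs (s i : ℕ) : ∃ a b, a + b = i ∧
    fs (s + 1) a + fs s a + fs s b ≤ fs (s + 1) (i + 1) := by
  induction i with
  | zero =>
    refine ⟨0, 0, rfl, ?_⟩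
    rw [fs_succ]
    simp only [fs_zero, dl]
    norm_num
  | succ i ih =>
    obtain ⟨a, b, hab, h⟩ := ih
    have h1 := le_dl_succ (s := s) hab
    rw [min_le_iff] at h1
    rcases h1 with h1 | h1
    · refine ⟨a + 1, b, by omega, le_trans (le_of_eq ?_)
        ((add_le_add h h1).trans (fs_succ _ _).ge)⟩
      rw [fs_succ, fs_succ]
      ring
    · refine ⟨a, b + 1, by omega, le_trans (le_of_eq ?_)
        ((add_le_add h h1).trans (fs_succ _ _).ge)⟩
      rw [fs_succ s b]
      ring

lemma F_eq_fs (s i : ℕ) : F (i + 1) (s + 1) = fs s i := by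
  induction s generalizing i with
  | zero =>
    cases i with
    | zero => simp [F_one, fs_zero]
    | succ i => rw [F_space_one (by omega), fs_succ]; simp [dl]
  | succ s ihs =>
    induction i using Nat.strong_induction_on with
    | _ i ih =>
      cases i with
      | zero => simp [F_one, fs_zero]
      | succ i =>
        apply le_antisymm
        · obtain ⟨a, b, hab, h⟩ := exists_le_fs s i
          refine le_trans ?_ h
          have := F_add_le (m := a + 1) (k := b + 1) (S := s + 1) (by omega) (by omega)
          rwa [ih a (by omega), ihs, ihs, show a + 1 + (b + 1) = i + 1 + 1 by omega] at this
        · obtain ⟨m, h1, h2, h⟩ := exists_F_add_le (n := i + 1 + 1) (S := s + 1)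
            (by omega) (by omega)
          refine le_trans ?_ h
          obtain ⟨a, rfl⟩ : ∃ a, m = a + 1 := ⟨m - 1, by omega⟩
          rw [show i + 1 + 1 - (a + 1) = (i - a) + 1 by omega, ih a (by omega), ihs, ihs]
          exact fs_le s i a (i - a) (by omega)

lemma fs_antitone (s i : ℕ) : fs (s + 1) i ≤ fs s i :=
  add_le_add le_rfl (Finset.sum_le_sum fun j _ => dl_antitone s j)

/-- `Δ n S` is nonincreasing in `S`. -/
theorem delta_antitone (n : ℤ) (S : ℕ) (hS : 1 ≤ S) :
    Δ n (S + 1) ≤ Δ n S := by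
  obtain ⟨s, rfl⟩ : ∃ s, S = s + 1 := ⟨S - 1, by omega⟩
  by_cases hn : n ≤ 0
  · simp [Δ, hn]
  obtain ⟨i, hi⟩ : ∃ i, n.toNat = i + 1 := ⟨n.toNat - 1, by omega⟩
  have key : ∀ s, fs s (i + 1) < ⊤ → Δ n (s + 1) = dl s i := by
    intro s hs
    rw [Δ, if_neg hn, hi, F_eq_fs, F_eq_fs, if_pos hs, fs_succ]
    have hfin : fs s i ≠ ⊤ := by
      rintro h
      rw [fs_succ, h] at hs
      simp at hs
    exact (ENat.addLECancellable_of_ne_top hfin).add_tsub_cancel_left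
  by_cases hs : fs s (i + 1) < ⊤
  · rw [key s hs, key (s + 1) ((fs_antitone s _).trans_lt hs)]
    exact dl_antitone s i
  · have : Δ n (s + 1) = ⊤ := by rw [Δ, if_neg hn, hi, F_eq_fs, if_neg hs]
    rw [this]
    exact le_top
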